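/- Let X be a countable set and equip the group Sym(X) of all bijections of X with the permutation topology, i.e., the topology of pointwise convergence where X is discrete, for which the sets {g ∈ Sym(X) : g(a) = f(a) for all a ∈ A}, with f ∈ Sym(X) and A ⊆ X finite, form a basis. Let Γ be a subgroup of Sym(X) which is closed in this topology. Then there exists a relational first-order language L and an L-structure on the universe X which is ultrahomogeneous and whose automorphism group, viewed as a subgroup of Sym(X), is exactly Γ. -/

import Mathlib

/-- The permutation topology on `Sym(X)`: the topology of pointwise convergence,
where `X` carries the discrete topology. -/
def permTop (X : Type*) : TopologicalSpace (Equiv.Perm X) :=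
  letI : TopologicalSpace X := ⊥
  TopologicalSpace.induced (fun g : Equiv.Perm X => (g : X → X)) inferInstance

/-- For every countable set `X` and every subgroup `Γ ≤ Sym(X)` closed in the permutation
topology, there is a relational first-order language `L` and an ultrahomogeneous
`L`-structure on `X` whose automorphism group, as a subgroup of `Sym(X)`, is exactly `Γ`. -/
theorem stmt_6 {X : Type u} [Countable X] (Γ : Subgroup (Equiv.Perm X))
    (hclosed : @IsClosed _ (permTop X) (Γ : Set (Equiv.Perm X))) :
    ∃ (L : FirstOrder.Language.{u, u}) (S : L.Structure X),
      L.IsRelational ∧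
      @FirstOrder.Language.IsUltrahomogeneous L X S ∧
      ∀ f : Equiv.Perm X,
        (∃ e : @FirstOrder.Language.Equiv L X X S S, e.toEquiv = f) ↔ f ∈ Γ := by
  classical
  let L : FirstOrder.Language.{u, u} := ⟨fun _ => PEmpty, fun n => Fin n → X⟩
  let S : L.Structure X :=
    { funMap := fun {n} f _ => PEmpty.elim f
      RelMap := fun {n} a x => ∃ g ∈ Γ, ∀ i, g (a i) = x i }
  have hrel : L.IsRelational := fun n => (inferInstance : IsEmpty PEmpty)
  have auto : ∀ f ∈ Γ, ∃ e : @FirstOrder.Language.Equiv L X X S S, e.toEquiv = f := by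
    intro f hf
    refine ⟨{ toEquiv := f, map_fun' := fun φ _ => PEmpty.elim φ, map_rel' := ?_ }, rfl⟩
    intro n a x
    constructor
    · rintro ⟨g, hg, h⟩
      refine ⟨f⁻¹ * g, Γ.mul_mem (Γ.inv_mem hf) hg, fun i => ?_⟩
      have := h i
      simp only [Equiv.Perm.mul_apply, Equiv.Perm.inv_eq_iff_eq]
      exact this
    · rintro ⟨g, hg, h⟩
      refine ⟨f * g, Γ.mul_mem hf hg, fun i => ?_⟩
      simp only [Equiv.Perm.mul_apply, h i]
      rfl
  refine ⟨L, S, hrel, ?_, fun f => ⟨?_, auto f⟩⟩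
  · intro T hT f
    obtain ⟨t, rfl⟩ := hT
    have ht : ∀ x, x ∈ FirstOrder.Language.Substructure.closure L (t : Set X) ↔ x ∈ t := by
      intro x
      rw [FirstOrder.Language.Substructure.mem_closure_iff_of_isRelational]
      rfl
    let a : Fin t.card → FirstOrder.Language.Substructure.closure L (t : Set X) :=
      fun i => ⟨t.equivFin.symm i, (ht _).2 (t.equivFin.symm i).2⟩
    have h1 : FirstOrder.Language.Structure.RelMap
        (L := L) (n := t.card) (fun i => (a i : X)) a :=
      ⟨1, Γ.one_mem, fun i => rfl⟩
    obtain ⟨g, hg, h⟩ := (f.map_rel' _ _).2 h1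
    obtain ⟨e, he⟩ := auto g hg
    refine ⟨e, ?_⟩
    ext ⟨x, hx⟩
    have hi := h (t.equivFin ⟨x, (ht x).1 hx⟩)
    have hax : a (t.equivFin ⟨x, (ht x).1 hx⟩) = ⟨x, hx⟩ := by
      simp [a]
    simp only [Function.comp, hax] at hi
    have e1 : e x = g x := by rw [← he]; rfl
    exact (e1.trans hi).symm
  · rintro ⟨e, rfl⟩
    letI : TopologicalSpace X := ⊥
    by_contra hf
    obtain ⟨U, hU, hUΓ⟩ := hclosed.isOpen_compl
    have hmem : ∀ g : Equiv.Perm X, (g : X → X) ∈ U ↔ g ∉ Γ := fun g => by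
      have := Set.ext_iff.1 hUΓ g
      exact this
    obtain ⟨t, u, h1, h2⟩ := isOpen_pi_iff.1 hU _ ((hmem _).2 hf)
    let a : Fin t.card → X := fun i => t.equivFin.symm i
    have h3 : FirstOrder.Language.Structure.RelMap (L := L) (n := t.card) a a :=
      ⟨1, Γ.one_mem, fun i => rfl⟩
    obtain ⟨g, hg, h⟩ := (e.map_rel' _ _).2 h3
    refine (hmem g).1 (h2 fun x hx => ?_) hg
    have hi := h (t.equivFin ⟨x, hx⟩)
    have hax : a (t.equivFin ⟨x, hx⟩) = x := by simp [a]
    simp only [Function.comp, hax] at hi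
    rw [hi]
    exact (h1 x hx).2
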